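/- arXiv:2312.06314 — 3 statements merged into one kernel-verified Lean document; each statement's English description precedes it below -/
import Mathlib

section
/- Let G be a simple graph, let w be a walk in G from u to v, and let S be a finite set of vertices each lying on w (S is contained in the support of w). Then there exists a duplicate-free list (t_1,…,t_k) enumerating exactly the elements of S such that the length of w is at least dist(u,t_1) + Σ_{j=1}^{k−1} dist(t_j,t_{j+1}) + dist(t_k,v) (and at least dist(u,v) when S is empty). -/
/-- The chained distance `dist(u, t₁) + Σ_{j} dist(t_j, t_{j+1}) + dist(t_k, v)`
through a list of intermediate vertices, equal to `dist(u, v)` when the list is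
empty.  This is the cost of the Hamiltonian path `u, t₁, …, t_k, v` in the
metric closure (target graph) of `G`. -/
noncomputable def chainedDist {V : Type*} (G : SimpleGraph V) : V → List V → V → ℕ
  | u, [], v => G.dist u v
  | u, t :: ts, v => G.dist u t + chainedDist G t ts v

/-! Follow the walk from `u` and jump directly between selected stops. Each jump costs at most the
part of the walk it replaces, so a list of stops that occurs in order along the walk has chained
distance at most the length of the walk. Keeping a single occurrence of each vertex of `S` in the
support gives such a list. -/

section

variable {V : Type*} {G : SimpleGraph V}

theorem chainedDist_self_cons (u : V) (l : List V) (v : V) :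
    chainedDist G u (u :: l) v = chainedDist G u l v := by
  rw [chainedDist, SimpleGraph.dist_self, zero_add]

theorem chainedDist_le_dist_add_chainedDist {u x : V} (h : G.Reachable u x) (l : List V)
    (v : V) : chainedDist G u l v ≤ G.dist u x + chainedDist G x l v := by
  cases l with
  | nil => exact h.dist_triangle_left v
  | cons t l =>
    calc G.dist u t + chainedDist G t l v
        ≤ G.dist u x + G.dist x t + chainedDist G t l v := by
          gcongr
          exact h.dist_triangle_left t
      _ = G.dist u x + (G.dist x t + chainedDist G t l v) := add_assoc ..

theorem chainedDist_le_length_of_sublist_support {u v : V} (w : G.Walk u v) {l : List V}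
    (hl : l.Sublist w.support) : chainedDist G u l v ≤ w.length := by
  induction w generalizing l with
  | @nil u =>
    obtain rfl | rfl := List.sublist_singleton.mp hl <;> simp [chainedDist]
  | @cons u x v hadj p ih =>
    have le_of_sublist_tail {l' : List V} (hl' : l'.Sublist p.support) :
        chainedDist G u l' v ≤ (p.cons hadj).length :=
      calc chainedDist G u l' v
          ≤ G.dist u x + chainedDist G x l' v :=
            chainedDist_le_dist_add_chainedDist hadj.reachable l' v
        _ ≤ 1 + p.length := add_le_add (SimpleGraph.dist_eq_one_iff_adj.mpr hadj).le (ih hl')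
        _ = (p.cons hadj).length := add_comm ..
    rw [SimpleGraph.Walk.support_cons] at hl
    obtain hl | ⟨l', rfl, hl'⟩ := List.sublist_cons_iff.mp hl
    · exact le_of_sublist_tail hl
    · rw [chainedDist_self_cons]
      exact le_of_sublist_tail hl'

end

/-- If a walk `w` from `u` to `v` visits every vertex of a finite set `S`,
then there is a duplicate-free list enumerating exactly the elements of `S`
whose chained distance from `u` to `v` is at most the length of `w`. -/
theorem exists_enumeration_chainedDist_le_walk_length
    {V : Type*} [DecidableEq V] (G : SimpleGraph V)
    {u v : V} (w : G.Walk u v) (S : Finset V)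
    (hS : ∀ x ∈ S, x ∈ w.support) :
    ∃ l : List V, l.Nodup ∧ (∀ x, x ∈ l ↔ x ∈ S) ∧
      chainedDist G u l v ≤ w.length := by
  have hsub : (w.support.dedup.filter (· ∈ S)).Sublist w.support :=
    List.filter_sublist.trans (List.dedup_sublist _)
  refine ⟨_, (List.nodup_dedup _).filter _, fun x => ?_,
    chainedDist_le_length_of_sublist_support w hsub⟩
  simpa only [List.mem_filter, List.mem_dedup, decide_eq_true_eq, and_iff_right_iff_imp] using hS x
end

section
/- (Shortening lemma for conflict-free joint solutions.) Let p be a solution of an MCPF instance with makespan T, and for each time k ≤ T let visited(k) = { m : there exist k' ≤ k and an agent i ∈ f_A(t_m) with p(k',i) = t_m } be the set of targets covered by time k. If there are times 0 ≤ s < u ≤ T with p(s,i) = p(u,i) for every agent i and visited(s) = visited(u), then the map q defined by q(k,i) = p(k,i) for k ≤ s and q(k,i) = p(k + (u − s), i) for s < k ≤ T − (u − s) is a solution of the same instance with makespan T − (u − s). -/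
/-- An MCPF instance: a connected finite simple graph with unit edge costs,
`N` agents with pairwise distinct start vertices, a goal set, `M` target
vertices, and eligibility sets for each vertex. -/
structure MCPF (V : Type*) [Fintype V] (N M : ℕ) where
  G : SimpleGraph V
  conn : G.Connected
  o : Fin N → V
  o_inj : Function.Injective o
  Vd : Set V
  t : Fin M → V
  fA : V → Set (Fin N)

/-- `p` (read on times `0, …, T`) is a solution of makespan `T` of the MCPF
instance `P`: agents start at their starts, each step waits or moves along an
edge, there are no vertex conflicts and no edge (swap) conflicts, agents end
at distinct eligible goals, and every target is visited by an eligible agent. -/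
def MCPF.IsSolution {V : Type*} [Fintype V] {N M : ℕ} (P : MCPF V N M)
    (T : ℕ) (p : ℕ → Fin N → V) : Prop :=
  (∀ i, p 0 i = P.o i) ∧
  (∀ k < T, ∀ i, p (k + 1) i = p k i ∨ P.G.Adj (p k i) (p (k + 1) i)) ∧
  (∀ k ≤ T, Function.Injective (p k)) ∧
  (∀ k < T, ∀ i j : Fin N, i ≠ j →
    ¬(p (k + 1) i = p k j ∧ p (k + 1) j = p k i)) ∧
  (∃ δ : Fin N → V, Function.Injective δ ∧
    ∀ i, δ i ∈ P.Vd ∧ i ∈ P.fA (δ i) ∧ p T i = δ i) ∧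
  (∀ m : Fin M, ∃ k ≤ T, ∃ i, i ∈ P.fA (P.t m) ∧ p k i = P.t m)

/-!
Cutting out the segment is harmless step by step: because the joint position at the two ends of
the segment is the same, each step of the shortened plan, also the one across the seam, is a step
of `p`. Start and goals are kept, and a target first covered during the segment would have
enlarged the covered set.
-/

section Excise

variable {α : Type*} {p : ℕ → α} {s d k : ℕ}

/-- The sequence `p` without its `d` terms at the times `s + 1, …, s + d`. The segment is given by
its length rather than by its end `u = s + d`, so that no truncated subtraction occurs. -/
def excise (p : ℕ → α) (s d : ℕ) : ℕ → α :=
  fun k => if k ≤ s then p k else p (k + d)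

theorem excise_of_le (hk : k ≤ s) : excise p s d k = p k :=
  if_pos hk

theorem excise_of_lt (hk : s < k) : excise p s d k = p (k + d) :=
  if_neg hk.not_ge

theorem excise_of_ge (hp : p s = p (s + d)) (hk : s ≤ k) : excise p s d k = p (k + d) := by
  rcases hk.eq_or_lt with rfl | hlt
  · rw [excise_of_le le_rfl, hp]
  · exact excise_of_lt hlt

theorem exists_excise_step_eq (hp : p s = p (s + d)) (k : ℕ) :
    ∃ l ≤ k + d, excise p s d k = p l ∧ excise p s d (k + 1) = p (l + 1) := by
  rcases lt_or_ge k s with hk | hk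
  · exact ⟨k, k.le_add_right d, excise_of_le hk.le, excise_of_le hk⟩
  · refine ⟨k + d, le_rfl, excise_of_ge hp hk, ?_⟩
    rw [excise_of_lt (Nat.lt_succ_of_le hk), Nat.add_right_comm]

end Excise

namespace MCPF

variable {V : Type*} [Fintype V] {N M : ℕ} {P : MCPF V N M} {p q : ℕ → Fin N → V}

/-- The set `visited(k)` of (indices of) targets that an eligible agent has reached by time `k`
when the agents move according to `p`. -/
def visited (P : MCPF V N M) (p : ℕ → Fin N → V) (k : ℕ) : Set (Fin M) :=
  {m | ∃ k' ≤ k, ∃ i, i ∈ P.fA (P.t m) ∧ p k' i = P.t m}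

theorem visited_subset_visited_excise {s d n : ℕ} (hsn : s ≤ n)
    (hseg : P.visited p (s + d) ⊆ P.visited p s) :
    P.visited p (n + d) ⊆ P.visited (excise p s d) n := by
  rintro m ⟨k, hk, i, hi, hki⟩
  rcases le_or_gt k (s + d) with hks | hks
  · obtain ⟨l, hl, j, hj, hlj⟩ := hseg ⟨k, hks, i, hi, hki⟩
    exact ⟨l, hl.trans hsn, j, hj, by rwa [excise_of_le hl]⟩
  · obtain ⟨l, rfl⟩ := Nat.exists_eq_add_of_le' (le_of_add_le_right hks.le)
    exact ⟨l, Nat.le_of_add_le_add_right hk, i, hi,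
      by rwa [excise_of_lt (Nat.lt_of_add_lt_add_right hks)]⟩

theorem IsSolution.of_steps {T n : ℕ} (hp : P.IsSolution T p) (hstart : q 0 = p 0)
    (hend : q n = p T) (hstep : ∀ k < n, ∃ l < T, q k = p l ∧ q (k + 1) = p (l + 1))
    (hvisited : P.visited p T ⊆ P.visited q n) : P.IsSolution n q := by
  obtain ⟨hp_start, hp_move, hp_inj, hp_swap, hp_goal, hp_target⟩ := hp
  refine ⟨by rwa [hstart], fun k hk => ?move, fun k hk => ?vertex, fun k hk => ?swap,
    by rwa [hend], fun m => hvisited (hp_target m)⟩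
  case move =>
    obtain ⟨l, hl, hkl, hkl'⟩ := hstep k hk
    rw [hkl, hkl']
    exact hp_move l hl
  case vertex =>
    rcases hk.eq_or_lt with rfl | hlt
    · rw [hend]
      exact hp_inj T le_rfl
    · obtain ⟨l, hl, hkl, -⟩ := hstep k hlt
      rw [hkl]
      exact hp_inj l hl.le
  case swap =>
    obtain ⟨l, hl, hkl, hkl'⟩ := hstep k hk
    rw [hkl, hkl']
    exact hp_swap l hl

end MCPF

/-- Shortening lemma: if a solution `p` of makespan `T` repeats a joint vertex
at times `s < u ≤ T` with the same set of targets already covered, then cutting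
out the segment between `s` and `u` yields a solution of makespan `T - (u - s)`. -/
theorem mcpf_shortening {V : Type*} [Fintype V] {N M : ℕ} (P : MCPF V N M)
    {T : ℕ} {p : ℕ → Fin N → V} (hp : P.IsSolution T p)
    {s u : ℕ} (hsu : s < u) (huT : u ≤ T)
    (hrepeat : ∀ i, p s i = p u i)
    (hvisited :
      {m : Fin M | ∃ k ≤ s, ∃ i, i ∈ P.fA (P.t m) ∧ p k i = P.t m} =
      {m : Fin M | ∃ k ≤ u, ∃ i, i ∈ P.fA (P.t m) ∧ p k i = P.t m}) :
    P.IsSolution (T - (u - s))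
      (fun k i => if k ≤ s then p k i else p (k + (u - s)) i) := by
  obtain ⟨d, rfl⟩ := Nat.exists_eq_add_of_le hsu.le
  obtain ⟨n, rfl⟩ := Nat.exists_eq_add_of_le' (le_of_add_le_right huT)
  have hsn : s ≤ n := Nat.le_of_add_le_add_right huT
  have hends : p s = p (s + d) := funext hrepeat
  have hcut : (fun k i => if k ≤ s then p k i else p (k + d) i) = excise p s d := by
    funext k i
    exact (ite_apply ..).symm
  rw [Nat.add_sub_cancel_left, Nat.add_sub_cancel, hcut]
  refine hp.of_steps (excise_of_le s.zero_le) (excise_of_ge hends hsn) (fun k hk => ?_)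
    (MCPF.visited_subset_visited_excise hsn hvisited.ge)
  obtain ⟨l, hl, hstep⟩ := exists_excise_step_eq hends k
  exact ⟨l, hl.trans_lt (Nat.add_lt_add_right hk d), hstep⟩
end

section
/- (Finite solution-length bound underlying completeness.) Consider an MCPF instance on a graph with vertex set V, with N agents and M targets. If the instance admits a solution of some makespan, then it admits a solution of makespan at most |V|^N · 2^M − 1. -/
/-! DMS* searches a graph on pairs (joint vertex, set of visited targets). Solutions of makespan `T`
are exactly the length-`T` paths of this graph from the initial state to a final one, and cutting
out the loops of such a path makes it shorter than the number of states. -/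

section RelSeries

variable {α : Type*} {r : SetRel α α}

theorem exists_relSeries_length_lt_of_not_injective {s : RelSeries r}
    (hs : ¬ Function.Injective s) :
    ∃ s' : RelSeries r, s'.head = s.head ∧ s'.last = s.last ∧ s'.length < s.length := by
  obtain ⟨a, b, hab, hlt⟩ : ∃ a b, s a = s b ∧ a < b := by
    contrapose! hs
    exact Function.Injective.of_lt_imp_ne fun a b hlt hab => (hs a b hab).not_gt hlt
  have hconn : (s.take a).last = (s.drop b).head := by
    rw [RelSeries.last_take, RelSeries.head_drop, hab]
  refine ⟨(s.take a).smash (s.drop b) hconn, by simp, by simp, ?_⟩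
  simp only [RelSeries.smash_length, RelSeries.take_length, RelSeries.drop_length]
  omega

theorem exists_relSeries_length_lt_card [Finite α] (s : RelSeries r) :
    ∃ s' : RelSeries r, s'.head = s.head ∧ s'.last = s.last ∧ s'.length < Nat.card α := by
  induction hn : s.length using Nat.strong_induction_on generalizing s with
  | _ n ih =>
    subst hn
    by_cases hs : Function.Injective s
    · have hcard := Nat.card_le_card_of_injective s hs
      rw [Nat.card_fin] at hcard
      exact ⟨s, rfl, rfl, hcard⟩
    · obtain ⟨s₁, hhead₁, hlast₁, hlen₁⟩ := exists_relSeries_length_lt_of_not_injective hs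
      obtain ⟨s₂, hhead₂, hlast₂, hlen₂⟩ := ih s₁.length hlen₁ s₁ rfl
      exact ⟨s₂, hhead₂.trans hhead₁, hlast₂.trans hlast₁, hlen₂⟩

end RelSeries

namespace MCPF

/-- A state of the DMS* search: the joint vertex of the agents and the set of targets visited so
far, the latter in place of the binary vector in `{0,1}^M`. -/
abbrev SearchState (V : Type*) (N M : ℕ) : Type _ :=
  (Fin N → V) × Set (Fin M)

theorem card_searchState {V : Type*} [Fintype V] {N M : ℕ} :
    Nat.card (SearchState V N M) = Fintype.card V ^ N * 2 ^ M := by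
  simp

variable {V : Type*} [Fintype V] {N M : ℕ} (P : MCPF V N M)

/-- The targets at which an eligible agent stands when the agents are at the joint vertex `v`. -/
def reached (v : Fin N → V) : Set (Fin M) :=
  {m | ∃ i, i ∈ P.fA (P.t m) ∧ v i = P.t m}

/-- A conflict-free joint move from `v` to `w`. Vertex conflicts are only excluded at `w`: at the
start they are excluded by `P.o_inj`. -/
def IsMove (v w : Fin N → V) : Prop :=
  (∀ i, w i = v i ∨ P.G.Adj (v i) (w i)) ∧ Function.Injective w ∧
    ∀ i j, i ≠ j → ¬(w i = v j ∧ w j = v i)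

/-- The initial state of the DMS* search. -/
def initial : SearchState V N M :=
  (P.o, P.reached P.o)

/-- The edges of the DMS* search graph. -/
def searchRel : SetRel (SearchState V N M) (SearchState V N M) :=
  {x | P.IsMove x.1.1 x.2.1 ∧ x.2.2 = x.1.2 ∪ P.reached x.2.1}

/-- The accepting states of the DMS* search. Distinctness of the goals is left to vertex-conflict
freeness. -/
def IsFinal (x : SearchState V N M) : Prop :=
  (∀ i, x.1 i ∈ P.Vd ∧ i ∈ P.fA (x.1 i)) ∧ x.2 = Set.univ

/-- The search state of the plan `p` at time `k`. -/
def stateAt (p : ℕ → Fin N → V) (k : ℕ) : SearchState V N M :=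
  (p k, Set.accumulate (fun l => P.reached (p l)) k)

variable {P} {T : ℕ} {p : ℕ → Fin N → V}

theorem stateAt_zero_eq_initial_iff : P.stateAt p 0 = P.initial ↔ p 0 = P.o := by
  constructor
  · exact congrArg Prod.fst
  · intro h
    simp only [stateAt, initial, Set.accumulate_zero_nat, h]

theorem stateAt_succ_snd (k : ℕ) :
    (P.stateAt p (k + 1)).2 = (P.stateAt p k).2 ∪ P.reached (p (k + 1)) :=
  Set.accumulate_succ _ k

theorem stateAt_mem_searchRel_iff {k : ℕ} :
    (P.stateAt p k, P.stateAt p (k + 1)) ∈ P.searchRel ↔ P.IsMove (p k) (p (k + 1)) :=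
  and_iff_left (stateAt_succ_snd k)

theorem stateAt_snd_eq_univ_iff :
    (P.stateAt p T).2 = Set.univ ↔
      ∀ m, ∃ k ≤ T, ∃ i, i ∈ P.fA (P.t m) ∧ p k i = P.t m := by
  simp only [stateAt, Set.eq_univ_iff_forall, Set.mem_accumulate, reached, Set.mem_ofPred_eq]

theorem isSolution_iff_stateAt :
    P.IsSolution T p ↔
      P.stateAt p 0 = P.initial ∧
      (∀ k < T, (P.stateAt p k, P.stateAt p (k + 1)) ∈ P.searchRel) ∧
      P.IsFinal (P.stateAt p T) := by
  simp only [stateAt_zero_eq_initial_iff, stateAt_mem_searchRel_iff, IsFinal,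
    stateAt_snd_eq_univ_iff]
  constructor
  · rintro ⟨hstart, hstep, hinj, hswap, ⟨δ, -, hδ⟩, htarget⟩
    refine ⟨funext hstart, fun k hk => ⟨hstep k hk, hinj (k + 1) hk, hswap k hk⟩,
      fun i => ?_, htarget⟩
    obtain ⟨hmem, helig, hpT⟩ := hδ i
    rw [← hpT] at hmem helig
    exact ⟨hmem, helig⟩
  · rintro ⟨hstart, hmove, hgoal, htarget⟩
    have hinj : ∀ k ≤ T, Function.Injective (p k) := by
      rintro (_ | k) hk
      · exact hstart ▸ P.o_inj
      · exact (hmove k hk).2.1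
    exact ⟨congrFun hstart, fun k hk => (hmove k hk).1, hinj, fun k hk => (hmove k hk).2.2,
      ⟨p T, hinj T le_rfl, fun i => ⟨(hgoal i).1, (hgoal i).2, rfl⟩⟩, htarget⟩

/-- The path in the search graph traced by a solution. -/
def IsSolution.toSearchSeries (h : P.IsSolution T p) : RelSeries P.searchRel where
  length := T
  toFun k := P.stateAt p k
  step k := (isSolution_iff_stateAt.mp h).2.1 k k.isLt

theorem IsSolution.head_toSearchSeries (h : P.IsSolution T p) :
    h.toSearchSeries.head = P.initial :=
  (isSolution_iff_stateAt.mp h).1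

theorem IsSolution.isFinal_last_toSearchSeries (h : P.IsSolution T p) :
    P.IsFinal h.toSearchSeries.last :=
  (isSolution_iff_stateAt.mp h).2.2

/-- The plan read off a path in the search graph; the agents stay put once the path has ended. -/
def planOf (s : RelSeries P.searchRel) (k : ℕ) : Fin N → V :=
  (s (Fin.clamp k s.length)).1

theorem stateAt_planOf {s : RelSeries P.searchRel} (hhead : s.head = P.initial)
    (k : Fin (s.length + 1)) : P.stateAt (planOf s) k = s k := by
  have fst_eq (j : Fin (s.length + 1)) : planOf s j = (s j).1 := by
    have hj : Fin.clamp j s.length = j := Fin.ext (min_eq_left j.is_le)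
    rw [planOf, hj]
  induction k using Fin.induction with
  | zero =>
    have hstart : planOf s 0 = P.o := (fst_eq 0).trans (congrArg Prod.fst hhead)
    exact (stateAt_zero_eq_initial_iff.mpr hstart).trans hhead.symm
  | succ k ih =>
    refine Prod.ext (fst_eq k.succ) ?_
    calc (P.stateAt (planOf s) k.succ).2
        = (P.stateAt (planOf s) k.castSucc).2 ∪ P.reached (planOf s k.succ) := stateAt_succ_snd _
      _ = (s k.castSucc).2 ∪ P.reached (s k.succ).1 := by rw [ih, fst_eq]
      _ = (s k.succ).2 := (s.step k).2.symm

theorem isSolution_planOf {s : RelSeries P.searchRel} (hhead : s.head = P.initial)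
    (hlast : P.IsFinal s.last) : P.IsSolution s.length (planOf s) := by
  have hstate := stateAt_planOf hhead
  refine isSolution_iff_stateAt.mpr ⟨(hstate 0).trans hhead, fun k hk => ?_, ?_⟩
  · have hk₀ := hstate (Fin.castSucc ⟨k, hk⟩)
    have hk₁ := hstate (Fin.succ ⟨k, hk⟩)
    exact hk₀ ▸ hk₁ ▸ s.step ⟨k, hk⟩
  · exact (hstate (Fin.last _)).symm ▸ hlast

end MCPF

/-- Finite solution-length bound underlying completeness: if an MCPF instance
admits a solution of some makespan, then it admits a solution of makespan at
most `|V|^N * 2^M - 1`. -/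
theorem mcpf_exists_short_solution {V : Type*} [Fintype V] {N M : ℕ}
    (P : MCPF V N M)
    (h : ∃ (T : ℕ) (p : ℕ → Fin N → V), P.IsSolution T p) :
    ∃ (T : ℕ) (p : ℕ → Fin N → V), P.IsSolution T p ∧
      T ≤ Fintype.card V ^ N * 2 ^ M - 1 := by
  obtain ⟨T, p, hp⟩ := h
  obtain ⟨s, hhead, hlast, hlen⟩ := exists_relSeries_length_lt_card hp.toSearchSeries
  have hinit : s.head = P.initial := hhead.trans hp.head_toSearchSeries
  have hfinal : P.IsFinal s.last := hlast ▸ hp.isFinal_last_toSearchSeries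
  exact ⟨s.length, MCPF.planOf s, MCPF.isSolution_planOf hinit hfinal,
    Nat.le_sub_one_of_lt (hlen.trans_eq MCPF.card_searchState)⟩
end
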